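/- For each k ≥ 1 and |q| < 1: Σ_{λ: l(λ) ≤ k} q^{2|λ| + 2n_2(λ) - 2λ_1^2 - λ_1} (-q;q)_{2λ_1} / ((-q^2;q^2)_{λ_k} (q^2;q^2)_λ) = ((-q;q)_∞ / (q;q)_∞) · (q^{4k}, q^{4k-1}, q; q^{4k})_∞. -/

import Mathlib

/-- Finite q-Pochhammer symbol `(x;q)_n = ∏_{k=0}^{n-1} (1 - x q^k)`. -/
noncomputable def qPoch (x q : ℂ) (n : ℕ) : ℂ := ∏ k ∈ Finset.range n, (1 - x * q ^ k)

/-- Infinite q-Pochhammer symbol `(x;q)_∞ = ∏_{k≥0} (1 - x q^k)`. -/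
noncomputable def qPochInf (x q : ℂ) : ℂ := ∏' k : ℕ, (1 - x * q ^ k)

/-- Partitions with at most `k` (positive) parts: antitone sequences of naturals vanishing
from index `k` on; `l 0` is the largest part `λ_1`, and `l (k-1)` is `λ_k`. -/
def PartK (k : ℕ) : Type := {l : ℕ → ℕ // Antitone l ∧ ∀ i, k ≤ i → l i = 0}

/-- `|λ| = Σ_i λ_i`. -/
def wtK (k : ℕ) (l : PartK k) : ℕ := ∑ i ∈ Finset.range k, l.1 i

/-- `n_2(λ) = Σ_i λ_i^2`. -/
def n2K (k : ℕ) (l : PartK k) : ℕ := ∑ i ∈ Finset.range k, (l.1 i) ^ 2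

/-- `n(λ) = Σ_i binom(λ_i, 2)`. -/
def nK (k : ℕ) (l : PartK k) : ℕ := ∑ i ∈ Finset.range k, Nat.choose (l.1 i) 2

/-- `(x;q)_λ = ∏_{i=1}^{k} (x;q)_{λ_i - λ_{i+1}}` (with `λ_{k+1} = 0`). -/
noncomputable def pochK (x q : ℂ) (k : ℕ) (l : PartK k) : ℂ :=
  ∏ i ∈ Finset.range k, qPoch x q (l.1 i - l.1 (i + 1))

/-!
By the `q`-Chu–Vandermonde sum, a Bailey pair `(α, β)` relative to `a` is carried to another one
by `α' r = a ^ r * q ^ r ^ 2 * α r` and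
`β' n = ∑_{m ≤ n} a ^ m * q ^ m ^ 2 / (q;q)_{n-m} * β m`.
In base `q ^ 2` and with `a = q ^ 2`, applying this `k - 1` times to Slater's pair E(3) produces a
nested sum whose indices `λ_1 ≥ ⋯ ≥ λ_k` are the parts of the partition in the multisum. The sum
over `λ_1` is then an instance of Bailey's lemma with `ρ = -q` and `σ = -q ^ 2`, that is, of the
`q`-Gauss sum. It turns the multisum into a theta series, which factors by the Jacobi triple
product identity.
-/

open Filter Topology Finset

section Pochhammer

variable {x q : ℂ}

theorem qPoch_zero (x q : ℂ) : qPoch x q 0 = 1 := prod_range_zero _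

theorem qPoch_succ (x q : ℂ) (n : ℕ) : qPoch x q (n + 1) = qPoch x q n * (1 - x * q ^ n) :=
  prod_range_succ _ n

theorem qPoch_add (x q : ℂ) (m n : ℕ) :
    qPoch x q (m + n) = qPoch x q m * qPoch (x * q ^ m) q n := by
  simp only [qPoch, prod_range_add, pow_add, mul_assoc]

theorem qPoch_succ' (x q : ℂ) (n : ℕ) : qPoch x q (n + 1) = (1 - x) * qPoch (x * q) q n := by
  rw [add_comm, qPoch_add, qPoch_succ, qPoch_zero, pow_zero, pow_one, one_mul, mul_one]

theorem one_sub_mul_pow_mul_qPoch (x q : ℂ) (n : ℕ) :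
    (1 - x * q ^ n) * qPoch x q n = (1 - x) * qPoch (x * q) q n := by
  rw [← qPoch_succ', qPoch_succ, mul_comm]

theorem qPoch_two_mul (x q : ℂ) (n : ℕ) :
    qPoch x q (2 * n) = qPoch x (q ^ 2) n * qPoch (x * q) (q ^ 2) n := by
  induction n with
  | zero => simp only [mul_zero, qPoch_zero, mul_one]
  | succ n ih =>
    rw [Nat.mul_succ, qPoch_succ, qPoch_succ, ih, qPoch_succ, qPoch_succ, ← pow_mul]
    ring

theorem mul_pow_ne_one (hx : ‖x‖ < 1) (hq : ‖q‖ ≤ 1) (n : ℕ) : x * q ^ n ≠ 1 := by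
  refine ne_of_apply_ne norm (ne_of_lt ?_)
  rw [norm_one, norm_mul, norm_pow]
  exact mul_lt_one_of_nonneg_of_lt_one_left (norm_nonneg x) hx (pow_le_one₀ (norm_nonneg q) hq)

theorem mul_pow_mul_pow_ne_one (hx : ∀ n, x * q ^ n ≠ 1) (m n : ℕ) : x * q ^ m * q ^ n ≠ 1 := by
  simpa only [mul_assoc, ← pow_add] using hx (m + n)

theorem norm_one_sub_pow_le_two (hq : ‖q‖ ≤ 1) (n : ℕ) : ‖1 - q ^ n‖ ≤ 2 := by
  refine (norm_sub_le _ _).trans ?_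
  rw [norm_one, norm_pow]
  linarith [pow_le_one₀ (n := n) (norm_nonneg q) hq]

theorem qPoch_ne_zero (hx : ∀ n, x * q ^ n ≠ 1) (n : ℕ) : qPoch x q n ≠ 0 :=
  prod_ne_zero_iff.2 fun i _ => sub_ne_zero.2 (hx i).symm

theorem summable_norm_neg_mul_pow (x : ℂ) (hq : ‖q‖ < 1) :
    Summable fun n : ℕ => ‖-(x * q ^ n)‖ := by
  simp only [norm_neg, norm_mul, norm_pow]
  exact (summable_geometric_of_lt_one (norm_nonneg q) hq).mul_left ‖x‖

theorem tendsto_qPoch (x : ℂ) (hq : ‖q‖ < 1) :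
    Tendsto (qPoch x q) atTop (𝓝 (qPochInf x q)) := by
  unfold qPoch qPochInf
  simpa only [← sub_eq_add_neg] using
    (multipliable_one_add_of_summable (summable_norm_neg_mul_pow x hq)).tendsto_prod_tprod_nat

theorem tendsto_qPoch_two_mul (x : ℂ) (hq : ‖q‖ < 1) :
    Tendsto (fun n => qPoch x q (2 * n)) atTop (𝓝 (qPochInf x q)) :=
  (tendsto_qPoch x hq).comp (tendsto_id.const_mul_atTop' two_pos)

theorem qPochInf_ne_zero (hq : ‖q‖ < 1) (hx : ∀ n, x * q ^ n ≠ 1) : qPochInf x q ≠ 0 := by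
  unfold qPochInf
  simpa only [← sub_eq_add_neg] using
    tprod_one_add_ne_zero_of_summable
      (fun n => by simpa only [← sub_eq_add_neg] using sub_ne_zero.2 (hx n).symm)
      (summable_norm_neg_mul_pow x hq)

theorem qPoch_mul_qPochInf (x : ℂ) (hq : ‖q‖ < 1) (n : ℕ) :
    qPoch x q n * qPochInf (x * q ^ n) q = qPochInf x q := by
  refine tendsto_nhds_unique ((tendsto_qPoch (x * q ^ n) hq).const_mul (qPoch x q n)) ?_
  simpa only [← qPoch_add, add_comm] using
    (tendsto_add_atTop_iff_nat n).2 (tendsto_qPoch x hq)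

theorem one_sub_mul_qPochInf (x : ℂ) (hq : ‖q‖ < 1) :
    (1 - x) * qPochInf (x * q) q = qPochInf x q := by
  simpa only [qPoch_succ, qPoch_zero, pow_zero, pow_one, one_mul, mul_one]
    using qPoch_mul_qPochInf x hq 1

theorem norm_sq_lt_one (hq : ‖q‖ < 1) : ‖q ^ 2‖ < 1 := by
  simpa using pow_lt_one₀ (norm_nonneg q) hq two_ne_zero

theorem qPochInf_sq_mul_qPochInf_sq (x : ℂ) (hq : ‖q‖ < 1) :
    qPochInf x (q ^ 2) * qPochInf (x * q) (q ^ 2) = qPochInf x q := by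
  have hq2 := norm_sq_lt_one hq
  refine tendsto_nhds_unique ((tendsto_qPoch x hq2).mul (tendsto_qPoch (x * q) hq2)) ?_
  simpa only [qPoch_two_mul] using tendsto_qPoch_two_mul x hq

theorem exists_norm_le_of_tendsto {E : Type*} [SeminormedAddCommGroup E] {f : ℕ → E} {a : E}
    (h : Tendsto f atTop (𝓝 a)) :
    ∃ M, ∀ n, ‖f n‖ ≤ M := by
  obtain ⟨M, hM⟩ := (Metric.isBounded_range_of_tendsto f h).exists_norm_le
  exact ⟨M, fun n => hM _ ⟨n, rfl⟩⟩

theorem exists_norm_qPoch_le (x : ℂ) (hq : ‖q‖ < 1) : ∃ M, ∀ n, ‖qPoch x q n‖ ≤ M :=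
  exists_norm_le_of_tendsto (tendsto_qPoch x hq)

theorem exists_norm_inv_qPoch_le (hq : ‖q‖ < 1) (hx : ∀ n, x * q ^ n ≠ 1) :
    ∃ M, ∀ n, ‖(qPoch x q n)⁻¹‖ ≤ M :=
  exists_norm_le_of_tendsto ((tendsto_qPoch x hq).inv₀ (qPochInf_ne_zero hq hx))

end Pochhammer

section InvQFactorial

variable {q : ℂ}

/-- The reciprocal `1 / (q;q)_m` of the `q`-factorial, for an integer `m`, with the usual
convention that it vanishes for `m < 0`. -/
noncomputable def invQFactorial (q : ℂ) : ℤ → ℂ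
  | .ofNat m => (qPoch q q m)⁻¹
  | .negSucc _ => 0

theorem invQFactorial_natCast (q : ℂ) (m : ℕ) : invQFactorial q m = (qPoch q q m)⁻¹ := rfl

theorem invQFactorial_of_neg (q : ℂ) {m : ℤ} (hm : m < 0) : invQFactorial q m = 0 := by
  obtain ⟨n, rfl⟩ := Int.eq_negSucc_of_lt_zero hm
  rfl

theorem invQFactorial_sub_one (hq : ∀ n, q * q ^ n ≠ 1) (m : ℤ) :
    invQFactorial q (m - 1) = (1 - q ^ m.toNat) * invQFactorial q m := by
  rcases lt_or_ge m 0 with hm | hm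
  · rw [invQFactorial_of_neg q hm, invQFactorial_of_neg q (by lia), mul_zero]
  lift m to ℕ using hm
  rcases m with _ | n
  · simp [invQFactorial_of_neg]
  · have hn : 1 - q ^ (n + 1) ≠ 0 := by simpa [pow_succ'] using sub_ne_zero.2 (hq n).symm
    rw [Nat.cast_succ, add_sub_cancel_right, ← Nat.cast_succ, invQFactorial_natCast,
      invQFactorial_natCast, Int.toNat_natCast, qPoch_succ, ← pow_succ', mul_inv_rev,
      mul_inv_cancel_left₀ hn]

theorem tendsto_invQFactorial (hq : ‖q‖ < 1) :
    Tendsto (invQFactorial q) atTop (𝓝 (qPochInf q q)⁻¹) := by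
  rw [← Nat.map_cast_int_atTop, tendsto_map'_iff]
  exact (tendsto_qPoch q hq).inv₀ (qPochInf_ne_zero hq (mul_pow_ne_one hq hq.le))

theorem exists_norm_invQFactorial_le (hq : ‖q‖ < 1) : ∃ M, ∀ m, ‖invQFactorial q m‖ ≤ M := by
  obtain ⟨M, hM⟩ := exists_norm_inv_qPoch_le hq (mul_pow_ne_one hq hq.le)
  refine ⟨M, fun m => ?_⟩
  rcases lt_or_ge m 0 with hm | hm
  · simpa [invQFactorial_of_neg q hm] using (norm_nonneg _).trans (hM 0)
  · lift m to ℕ using hm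
    exact hM m

end InvQFactorial

section Gauss

variable {a b z q : ℂ}

/-- The `m`-th term of the `₂φ₁` series summed by the `q`-Gauss formula. The denominator parameter
is written `abz` instead of `c`, so that `z = c / (ab)` needs no division. -/
noncomputable def qGaussTerm (a b z q : ℂ) (m : ℕ) : ℂ :=
  qPoch a q m * qPoch b q m / (qPoch q q m * qPoch (a * b * z) q m) * z ^ m

theorem exists_norm_qGaussTerm_le (hq : ‖q‖ < 1) (habz : ∀ n, a * b * z * q ^ n ≠ 1) :
    ∃ M, ∀ N m, ‖qGaussTerm a b (z * q ^ N) q m‖ ≤ M * (‖z‖ * ‖q‖ ^ N) ^ m := by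
  obtain ⟨A, hA⟩ := exists_norm_qPoch_le a hq
  obtain ⟨B, hB⟩ := exists_norm_qPoch_le b hq
  obtain ⟨C, hC⟩ := exists_norm_qPoch_le (a * b * z) hq
  obtain ⟨D, hD⟩ := exists_norm_inv_qPoch_le hq (mul_pow_ne_one hq hq.le)
  obtain ⟨E, hE⟩ := exists_norm_inv_qPoch_le hq habz
  refine ⟨A * B * (D * (C * E)), fun N m => ?_⟩
  have shift : (qPoch (a * b * (z * q ^ N)) q m)⁻¹
      = qPoch (a * b * z) q N * (qPoch (a * b * z) q (N + m))⁻¹ := by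
    rw [qPoch_add, mul_inv, mul_inv_cancel_left₀ (qPoch_ne_zero habz N), mul_assoc (a * b)]
  rw [qGaussTerm, div_eq_mul_inv, mul_inv, shift]
  simp only [norm_mul, norm_pow]
  have hA0 := (norm_nonneg _).trans (hA 0)
  have hB0 := (norm_nonneg _).trans (hB 0)
  have hC0 := (norm_nonneg _).trans (hC 0)
  have hD0 := (norm_nonneg _).trans (hD 0)
  gcongr
  exacts [hA m, hB m, hD m, hC N, hE (N + m)]

theorem summable_qGaussTerm (hq : ‖q‖ < 1) (hz : ‖z‖ < 1) (habz : ∀ n, a * b * z * q ^ n ≠ 1) :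
    Summable (qGaussTerm a b z q) := by
  obtain ⟨M, hM⟩ := exists_norm_qGaussTerm_le hq habz
  refine .of_norm_bounded ((summable_geometric_of_lt_one (norm_nonneg z) hz).mul_left M) fun m => ?_
  simpa only [pow_zero, mul_one] using hM 0 m

theorem qGaussTerm_contiguous (hq : ∀ n, q * q ^ n ≠ 1) (habz : ∀ n, a * b * z * q ^ n ≠ 1)
    (m : ℕ) :
    (1 - a * b * z) * (1 - z) * qGaussTerm a b z q m
        - (1 - a * z) * (1 - b * z) * qGaussTerm a b (z * q) q m
      = (1 - a * b * z) * (1 - q ^ m) * qGaussTerm a b z q m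
        - (1 - a * b * z) * (1 - q ^ (m + 1)) * qGaussTerm a b z q (m + 1) := by
  have hQ := qPoch_ne_zero hq m
  have hC := qPoch_ne_zero habz m
  have hq' : 1 - q * q ^ m ≠ 0 := sub_ne_zero.2 (hq m).symm
  have hc' : 1 - a * b * z * q ^ m ≠ 0 := sub_ne_zero.2 (habz m).symm
  have hc0 : 1 - a * b * z ≠ 0 := sub_ne_zero.2 (by simpa using (habz 0).symm)
  have shift : qPoch (a * b * (z * q)) q m
      = qPoch (a * b * z) q m * (1 - a * b * z * q ^ m) / (1 - a * b * z) := by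
    rw [← qPoch_succ, qPoch_succ', mul_div_cancel_left₀ _ hc0, mul_assoc (a * b)]
  simp only [qGaussTerm, shift, qPoch_succ, mul_pow, pow_succ' q m, pow_succ z m]
  generalize 1 - q * q ^ m = D at hq' ⊢
  generalize hE : 1 - a * b * z * q ^ m = E at hc' ⊢
  field_simp
  rw [← hE]
  ring

theorem tsum_qGaussTerm_contiguous (hq : ‖q‖ < 1) (hz : ‖z‖ < 1)
    (habz : ∀ n, a * b * z * q ^ n ≠ 1) :
    (1 - a * b * z) * (1 - z) * ∑' m, qGaussTerm a b z q m
      = (1 - a * z) * (1 - b * z) * ∑' m, qGaussTerm a b (z * q) q m := by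
  have hzq : ‖z * q‖ < 1 := by
    simpa using mul_lt_one_of_nonneg_of_lt_one_left (norm_nonneg z) hz hq.le
  have habzq : ∀ n, a * b * (z * q) * q ^ n ≠ 1 := fun n => by
    simpa only [pow_succ', mul_assoc] using habz (n + 1)
  have hs := summable_qGaussTerm hq hz habz
  have hs' := summable_qGaussTerm hq hzq habzq
  set G : ℕ → ℂ := fun m => (1 - a * b * z) * (1 - q ^ m) * qGaussTerm a b z q m with hG
  have hGs : Summable G := by
    refine .of_norm_bounded (hs.norm.mul_left (‖1 - a * b * z‖ * 2)) fun m => ?_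
    simp only [hG, norm_mul]
    gcongr
    exact norm_one_sub_pow_le_two hq.le m
  have telescope : ∑' m, (G m - G (m + 1)) = 0 := by
    rw [hGs.tsum_sub ((summable_nat_add_iff 1).2 hGs), hGs.tsum_eq_zero_add]
    simp [hG]
  rw [← sub_eq_zero, ← tsum_mul_left, ← tsum_mul_left,
    ← (hs.mul_left _).tsum_sub (hs'.mul_left _), ← telescope]
  exact tsum_congr (qGaussTerm_contiguous (mul_pow_ne_one hq hq.le) habz)

theorem qPoch_mul_tsum_qGaussTerm (hq : ‖q‖ < 1) (hz : ‖z‖ < 1)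
    (habz : ∀ n, a * b * z * q ^ n ≠ 1) (N : ℕ) :
    qPoch (a * b * z) q N * qPoch z q N * ∑' m, qGaussTerm a b z q m
      = qPoch (a * z) q N * qPoch (b * z) q N * ∑' m, qGaussTerm a b (z * q ^ N) q m := by
  induction N with
  | zero => simp only [qPoch_zero, pow_zero, mul_one]
  | succ N ih =>
    have hzN : ‖z * q ^ N‖ < 1 := by
      simpa using mul_lt_one_of_nonneg_of_lt_one_left (norm_nonneg z) hz
        (pow_le_one₀ (norm_nonneg q) hq.le)
    have h := tsum_qGaussTerm_contiguous (a := a) (b := b) hq hzN fun n => by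
      simpa only [mul_assoc] using mul_pow_mul_pow_ne_one habz N n
    simp only [qPoch_succ, pow_succ, ← mul_assoc] at h ⊢
    linear_combination (1 - a * b * z * q ^ N) * (1 - z * q ^ N) * ih
      + qPoch (a * z) q N * qPoch (b * z) q N * h

theorem tendsto_tsum_qGaussTerm (hq : ‖q‖ < 1) (hz : ‖z‖ < 1)
    (habz : ∀ n, a * b * z * q ^ n ≠ 1) :
    Tendsto (fun N => ∑' m, qGaussTerm a b (z * q ^ N) q m) atTop (𝓝 1) := by
  obtain ⟨M, hM⟩ := exists_norm_qGaussTerm_le hq habz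
  rw [← tsum_ite_eq 0 fun _ => (1 : ℂ)]
  refine tendsto_tsum_of_dominated_convergence (bound := fun m => M * ‖z‖ ^ m)
    ((summable_geometric_of_lt_one (norm_nonneg z) hz).mul_left M) (fun m => ?_)
    (.of_forall fun N m => (hM N m).trans ?_)
  · rcases eq_or_ne m 0 with rfl | hm
    · simp [qGaussTerm, qPoch_zero]
    · have h0 : Tendsto (fun N : ℕ => M * (‖z‖ * ‖q‖ ^ N) ^ m) atTop (𝓝 0) := by
        simpa [hm] using (((tendsto_pow_atTop_nhds_zero_of_lt_one (norm_nonneg q) hq).const_mul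
          ‖z‖).pow m).const_mul M
      rw [if_neg hm]
      exact squeeze_zero_norm (fun N => hM N m) h0
  · have hM0 : 0 ≤ M := by simpa using (norm_nonneg _).trans (hM 0 0)
    gcongr
    exact mul_le_of_le_one_right (norm_nonneg z) (pow_le_one₀ (norm_nonneg q) hq.le)

theorem tsum_qGaussTerm (hq : ‖q‖ < 1) (hz : ‖z‖ < 1) (habz : ∀ n, a * b * z * q ^ n ≠ 1) :
    ∑' m, qGaussTerm a b z q m
      = qPochInf (a * z) q * qPochInf (b * z) q / (qPochInf (a * b * z) q * qPochInf z q) := by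
  rw [eq_div_iff (mul_ne_zero (qPochInf_ne_zero hq habz)
    (qPochInf_ne_zero hq (mul_pow_ne_one hz hq.le))), mul_comm]
  have lhs := ((tendsto_qPoch (a * b * z) hq).mul (tendsto_qPoch z hq)).mul_const
    (∑' m, qGaussTerm a b z q m)
  have rhs := ((tendsto_qPoch (a * z) hq).mul (tendsto_qPoch (b * z) hq)).mul
    (tendsto_tsum_qGaussTerm hq hz habz)
  simp only [qPoch_mul_tsum_qGaussTerm hq hz habz] at lhs
  simpa only [mul_one] using tendsto_nhds_unique lhs rhs

end Gauss

section BaileyPair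

variable {a q : ℂ} {α β : ℕ → ℂ}

/-- A term of the limiting case of the `q`-Chu–Vandermonde sum in which one numerator parameter
tends to infinity; the denominator parameter is `x * q`. -/
noncomputable def qVandermondeTerm (x q : ℂ) (ij : ℕ × ℕ) : ℂ :=
  x ^ ij.1 * q ^ ij.1 ^ 2 / (qPoch q q ij.1 * qPoch q q ij.2 * qPoch (x * q) q ij.1)

theorem qVandermondeTerm_contiguous (hq : ∀ n, q * q ^ n ≠ 1) {x : ℂ}
    (hx : ∀ n, x * q * q ^ n ≠ 1) (i j : ℕ) :
    q ^ i * (1 - q ^ (j + 1)) * qVandermondeTerm x q (i, j + 1)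
        + (1 - q ^ (i + 1)) * qVandermondeTerm x q (i + 1, j)
      = (1 - x * q)⁻¹ * qVandermondeTerm (x * q) q (i, j) := by
  have hi : 1 - q * q ^ i ≠ 0 := sub_ne_zero.2 (hq i).symm
  have hj : 1 - q * q ^ j ≠ 0 := sub_ne_zero.2 (hq j).symm
  have hxi : 1 - x * q * q ^ i ≠ 0 := sub_ne_zero.2 (hx i).symm
  have hx0 : 1 - x * q ≠ 0 := sub_ne_zero.2 (by simpa using (hx 0).symm)
  have hQi := qPoch_ne_zero hq i
  have hQj := qPoch_ne_zero hq j
  have shift : qPoch (x * q * q) q i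
      = qPoch (x * q) q i * (1 - x * q * q ^ i) / (1 - x * q) := by
    rw [← qPoch_succ, qPoch_succ', mul_div_cancel_left₀ _ hx0]
  simp only [qVandermondeTerm, shift, qPoch_succ, pow_succ' q i, pow_succ' q j]
  generalize 1 - q * q ^ i = D at hi ⊢
  generalize hE : 1 - x * q * q ^ i = E at hxi ⊢
  generalize 1 - x * q = F at hx0 ⊢
  field_simp
  rw [← hE]
  ring

theorem sum_qVandermondeTerm (hq : ∀ n, q * q ^ n ≠ 1) {x : ℂ} (hx : ∀ n, x * q * q ^ n ≠ 1)
    (N : ℕ) :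
    ∑ ij ∈ antidiagonal N, qVandermondeTerm x q ij = (qPoch q q N * qPoch (x * q) q N)⁻¹ := by
  induction N generalizing x with
  | zero => simp [qVandermondeTerm, qPoch_zero]
  | succ N ih =>
    have hxq : ∀ n, x * q * q * q ^ n ≠ 1 := fun n => by
      simpa using mul_pow_mul_pow_ne_one hx 1 n
    have hN : 1 - q * q ^ N ≠ 0 := sub_ne_zero.2 (hq N).symm
    have split : ∑ ij ∈ antidiagonal (N + 1), (1 - q * q ^ N) * qVandermondeTerm x q ij
        = ∑ ij ∈ antidiagonal (N + 1), q ^ ij.1 * (1 - q ^ ij.2) * qVandermondeTerm x q ij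
          + ∑ ij ∈ antidiagonal (N + 1), (1 - q ^ ij.1) * qVandermondeTerm x q ij := by
      rw [← sum_add_distrib]
      refine sum_congr rfl fun ij hij => ?_
      rw [← pow_succ', ← mem_antidiagonal.1 hij, pow_add]
      ring
    have combined : (1 - q * q ^ N) * ∑ ij ∈ antidiagonal (N + 1), qVandermondeTerm x q ij
        = (1 - x * q)⁻¹ * ∑ ij ∈ antidiagonal N, qVandermondeTerm (x * q) q ij := by
      rw [mul_sum, split, Nat.sum_antidiagonal_succ', Nat.sum_antidiagonal_succ, pow_zero, sub_self,
        mul_zero, zero_mul, zero_mul, zero_add, zero_add, ← sum_add_distrib, mul_sum]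
      exact sum_congr rfl fun ij _ => qVandermondeTerm_contiguous hq hx ij.1 ij.2
    rw [ih hxq] at combined
    rw [(eq_inv_mul_iff_mul_eq₀ hN).2 combined, qPoch_succ, qPoch_succ']
    simp only [mul_inv]
    ring

/-- The operator `f ↦ (n ↦ ∑_{m ≤ n} K n m * f m)` given by a lower triangular matrix `K`; only the
entries of `K` on and below the diagonal matter. -/
def lowerKernelSum {R : Type*} [NonUnitalNonAssocSemiring R] (K : ℕ → ℕ → R) (f : ℕ → R) (n : ℕ) :
    R :=
  ∑ m ∈ range (n + 1), K n m * f m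

/-- `(α, β)` is a Bailey pair relative to `a` with base `q`. -/
def IsBaileyPair (a q : ℂ) (α β : ℕ → ℂ) : Prop :=
  ∀ n, β n = ∑ r ∈ range (n + 1), α r / (qPoch q q (n - r) * qPoch (a * q) q (n + r))

/-- The kernel of the limiting case `ρ, σ → ∞` of Bailey's lemma, which sends the `β`-sequence of a
Bailey pair relative to `a` to that of the next pair in the Bailey chain. -/
noncomputable def baileyKernel (a q : ℂ) (n m : ℕ) : ℂ := a ^ m * q ^ m ^ 2 / qPoch q q (n - m)

theorem IsBaileyPair.step (h : IsBaileyPair a q α β) (hq : ∀ n, q * q ^ n ≠ 1)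
    (ha : ∀ n, a * q * q ^ n ≠ 1) :
    IsBaileyPair a q (fun r => a ^ r * q ^ r ^ 2 * α r) (lowerKernelSum (baileyKernel a q) β) := by
  intro n
  simp only [lowerKernelSum, baileyKernel, h _, mul_sum]
  have flip := sum_range_diag_flip (n + 1) fun r s =>
    a ^ (r + s) * q ^ (r + s) ^ 2 / qPoch q q (n - (r + s))
      * (α r / (qPoch q q s * qPoch (a * q) q (r + s + r)))
  refine (sum_congr rfl fun m _ => sum_congr rfl fun r hr => ?_).trans
    (flip.trans (sum_congr rfl fun r hr => ?_))
  · rw [Nat.add_sub_cancel' (mem_range_succ_iff.1 hr)]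
  · have hx : ∀ n, a * q ^ (2 * r) * q * q ^ n ≠ 1 := fun n => by
      simpa only [mul_right_comm a _ q] using mul_pow_mul_pow_ne_one ha (2 * r) n
    have hn : n + r = 2 * r + (n - r) := by have := mem_range_succ_iff.1 hr; lia
    have vandermonde := sum_qVandermondeTerm hq hx (n - r)
    rw [Nat.sum_antidiagonal_eq_sum_range_succ_mk] at vandermonde
    rw [Nat.succ_sub (mem_range_succ_iff.1 hr), hn, qPoch_add (a * q) q, mul_right_comm a q,
      mul_left_comm, ← div_div, div_eq_mul_inv _ (_ * _), ← vandermonde, mul_sum]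
    refine sum_congr rfl fun s _ => ?_
    rw [qVandermondeTerm, show r + s + r = 2 * r + s by ring, qPoch_add, mul_right_comm a q,
      Nat.sub_sub]
    ring

theorem IsBaileyPair.iterate (h : IsBaileyPair a q α β) (hq : ∀ n, q * q ^ n ≠ 1)
    (ha : ∀ n, a * q * q ^ n ≠ 1) (k : ℕ) :
    IsBaileyPair a q (fun r => (a ^ r * q ^ r ^ 2) ^ k * α r)
      ((lowerKernelSum (baileyKernel a q))^[k] β) := by
  induction k with
  | zero => simpa using h
  | succ k ih =>
    simpa only [Function.iterate_succ_apply', pow_succ', mul_assoc] using ih.step hq ha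

/-- The `α`-sequence of Slater's Bailey pair E(3), relative to `a = q`. -/
noncomputable def slaterAlpha (q : ℂ) (r : ℕ) : ℂ :=
  (-1) ^ r * q ^ r ^ 2 * (1 - q ^ (2 * r + 1)) / (1 - q)

/-- The `β`-sequence of Slater's Bailey pair E(3), relative to `a = q`. -/
noncomputable def slaterBeta (q : ℂ) (n : ℕ) : ℂ := (qPoch q q n * qPoch (-q) q n)⁻¹

/-- The `r`-th term of the sum expressing `slaterBeta q n` through `slaterAlpha q`,
continued by zero to `r > n`. -/
noncomputable def slaterSummand (q : ℂ) (n r : ℕ) : ℂ :=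
  (-1) ^ r * q ^ r ^ 2 * (1 - q ^ (2 * r + 1))
    * (invQFactorial q (n - r) * invQFactorial q (n + r + 1))

/-- The certificate (in the sense of the `q`-Zeilberger algorithm) for the recurrence in `n` of the
sum of `slaterSummand q n`. -/
noncomputable def slaterCertificate (q : ℂ) (n r : ℕ) : ℂ :=
  (-1) ^ r * q ^ (n + 1 + r * (r - 1)) * (1 - q ^ (2 * r))
    * (invQFactorial q (n + 1 - r) * invQFactorial q (n + r + 1))

theorem slater_telescoping (hq : ∀ n, q * q ^ n ≠ 1) {n r : ℕ} (hr : r ≤ n + 1) :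
    (1 - q ^ (2 * (n + 1))) * slaterSummand q (n + 1) r - slaterSummand q n r
      = slaterCertificate q n r - slaterCertificate q n (r + 1) := by
  have hn := invQFactorial_sub_one hq (n + 1 - r : ℤ)
  have hn' := invQFactorial_sub_one hq (n + r + 2 : ℤ)
  rw [show (n + 1 - r : ℤ) - 1 = n - r by ring,
    show (n + 1 - r : ℤ).toNat = n + 1 - r by lia] at hn
  rw [show (n + r + 2 : ℤ) - 1 = n + r + 1 by ring, show (n + r + 2 : ℤ).toNat = n + r + 2 by lia]
    at hn'
  simp only [slaterSummand, slaterCertificate]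
  push_cast
  rw [show (n + 1 + r + 1 : ℤ) = n + r + 2 by ring, show (n + 1 - (r + 1) : ℤ) = n - r by ring,
    show (n + (r + 1) + 1 : ℤ) = n + r + 2 by ring, hn, hn']
  generalize invQFactorial q (n + 1 - r) = I
  generalize invQFactorial q (n + r + 2) = J
  obtain ⟨m, hm⟩ := Nat.exists_eq_add_of_le hr
  rw [hm, Nat.add_sub_cancel_left, show n + r + 2 = m + r + r + 1 by lia]
  rcases r with _ | r
  · simp
    ring
  · simp
    ring

theorem sum_slaterSummand (hq : ∀ n, q * q ^ n ≠ 1) (n : ℕ) :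
    ∑ r ∈ range (n + 1), slaterSummand q n r = slaterBeta q n := by
  have hq2 : ∀ n, 1 - q ^ (2 * (n + 1)) ≠ 0 := fun n => by
    have := hq (2 * n + 1)
    rw [← pow_succ'] at this
    exact sub_ne_zero.2 this.symm
  induction n with
  | zero =>
    have h1 : 1 - q ≠ 0 := sub_ne_zero.2 (by simpa using (hq 0).symm)
    simp [slaterSummand, slaterBeta, invQFactorial, qPoch_succ, qPoch_zero, h1]
  | succ n ih =>
    have recurrence : (1 - q ^ (2 * (n + 1))) * ∑ r ∈ range (n + 2), slaterSummand q (n + 1) r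
        - ∑ r ∈ range (n + 2), slaterSummand q n r = 0 := by
      rw [mul_sum, ← sum_sub_distrib, sum_congr rfl fun r hr =>
        slater_telescoping hq (mem_range_succ_iff.1 hr), sum_range_sub']
      simp [slaterCertificate, invQFactorial_of_neg]
    have boundary : slaterSummand q n (n + 1) = 0 := by
      simp [slaterSummand, invQFactorial_of_neg]
    rw [sum_range_succ (slaterSummand q n), boundary, add_zero, ih, sub_eq_zero] at recurrence
    rw [(eq_inv_mul_iff_mul_eq₀ (hq2 n)).2 recurrence, slaterBeta, slaterBeta, ← mul_inv]
    congr 1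
    rw [qPoch_succ, qPoch_succ]
    ring

theorem isBaileyPair_slater (hq : ∀ n, q * q ^ n ≠ 1) :
    IsBaileyPair q q (slaterAlpha q) (slaterBeta q) := by
  intro n
  rw [← sum_slaterSummand hq]
  refine sum_congr rfl fun r hr => ?_
  have h1 : 1 - q ≠ 0 := sub_ne_zero.2 (by simpa using (hq 0).symm)
  have hr := mem_range_succ_iff.1 hr
  rw [slaterSummand, slaterAlpha, ← Nat.cast_sub hr, invQFactorial_natCast]
  norm_cast
  rw [invQFactorial_natCast, qPoch_succ']
  field_simp

end BaileyPair

section BaileyLemma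

variable {a q z ρ σ : ℂ} {α β : ℕ → ℂ}

theorem tsum_sum_antidiagonal {E : Type*} [NormedAddCommGroup E] [CompleteSpace E] {f : ℕ → ℕ → E}
    (hf : Summable fun ij : ℕ × ℕ => f ij.1 ij.2) :
    ∑' n, ∑ i ∈ range (n + 1), f i (n - i) = ∑' i, ∑' j, f i j := by
  rw [← hf.tsum_prod, ← HasAntidiagonal.sigmaAntidiagonalEquivProd.tsum_eq]
  refine Eq.trans (tsum_congr fun n => ?_)
    ((HasAntidiagonal.sigmaAntidiagonalEquivProd.summable_iff.2 hf).tsum_sigma'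
      fun n => (hasSum_fintype _).summable).symm
  rw [← Nat.sum_antidiagonal_eq_sum_range_succ f, ← sum_finset_coe,
    ← tsum_fintype (L := .unconditional _)]
  rfl

/-- The summand of the double series obtained by inserting the definition of a Bailey pair into
`∑ n, (ρ)_n (σ)_n z ^ n β n`, indexed by `(r, n - r)`. -/
noncomputable def baileySummand (a q ρ σ z : ℂ) (α : ℕ → ℂ) (r m : ℕ) : ℂ :=
  qPoch ρ q (r + m) * qPoch σ q (r + m) * z ^ (r + m)
    * (α r / (qPoch q q m * qPoch (a * q) q (r + m + r)))

theorem summable_baileySummand (ρ σ : ℂ) (hq : ‖q‖ < 1) (hz : ‖z‖ < 1)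
    (ha : ∀ n, a * q * q ^ n ≠ 1) (hα : Summable fun r => α r * z ^ r) :
    Summable fun rm : ℕ × ℕ => baileySummand a q ρ σ z α rm.1 rm.2 := by
  obtain ⟨A, hA⟩ := exists_norm_qPoch_le ρ hq
  obtain ⟨B, hB⟩ := exists_norm_qPoch_le σ hq
  obtain ⟨C, hC⟩ := exists_norm_inv_qPoch_le hq (mul_pow_ne_one hq hq.le)
  obtain ⟨D, hD⟩ := exists_norm_inv_qPoch_le hq ha
  have hA0 := (norm_nonneg _).trans (hA 0)
  have hB0 := (norm_nonneg _).trans (hB 0)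
  have hC0 := (norm_nonneg _).trans (hC 0)
  refine .of_norm_bounded ((hα.norm.mul_of_nonneg
    (summable_geometric_of_lt_one (norm_nonneg z) hz) (fun r => norm_nonneg _)
    (fun m => by positivity)).mul_left (A * B * (C * D))) fun ⟨r, m⟩ => ?_
  calc ‖baileySummand a q ρ σ z α r m‖
      = ‖qPoch ρ q (r + m)‖ * ‖qPoch σ q (r + m)‖
          * (‖(qPoch q q m)⁻¹‖ * ‖(qPoch (a * q) q (r + m + r))⁻¹‖)
          * (‖α r * z ^ r‖ * ‖z‖ ^ m) := by
        simp only [baileySummand, norm_mul, norm_div, norm_inv, norm_pow]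
        ring
    _ ≤ A * B * (C * D) * (‖α r * z ^ r‖ * ‖z‖ ^ m) := by
        gcongr
        exacts [hA _, hB _, hC _, hD _]

theorem tsum_baileySummand (hq : ‖q‖ < 1) (hz : ‖z‖ < 1) (ha : ∀ n, a * q * q ^ n ≠ 1)
    (hρσ : a * q = ρ * σ * z) (hρ : ∀ n, ρ * z * q ^ n ≠ 1) (hσ : ∀ n, σ * z * q ^ n ≠ 1) (r : ℕ) :
    ∑' m, baileySummand a q ρ σ z α r m
      = qPochInf (ρ * z) q * qPochInf (σ * z) q / (qPochInf (a * q) q * qPochInf z q)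
        * (qPoch ρ q r * qPoch σ q r / (qPoch (ρ * z) q r * qPoch (σ * z) q r)
          * (α r * z ^ r)) := by
  have param : ρ * q ^ r * (σ * q ^ r) * z = a * q * q ^ (2 * r) := by rw [hρσ]; ring
  have toGauss : ∀ m, baileySummand a q ρ σ z α r m
      = qPoch ρ q r * qPoch σ q r * z ^ r * α r / qPoch (a * q) q (2 * r)
        * qGaussTerm (ρ * q ^ r) (σ * q ^ r) z q m := fun m => by
    rw [baileySummand, qGaussTerm, param, show r + m + r = 2 * r + m by ring, qPoch_add,
      qPoch_add, qPoch_add]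
    ring
  rw [tsum_congr toGauss, tsum_mul_left, tsum_qGaussTerm hq hz fun n => by
    rw [param]; exact mul_pow_mul_pow_ne_one ha _ n]
  rw [param, mul_right_comm ρ, mul_right_comm σ, ← qPoch_mul_qPochInf (ρ * z) hq r,
    ← qPoch_mul_qPochInf (σ * z) hq r, ← qPoch_mul_qPochInf (a * q) hq (2 * r)]
  have hR := qPoch_ne_zero hρ r
  have hS := qPoch_ne_zero hσ r
  generalize qPoch (ρ * z) q r = R at hR ⊢
  generalize qPoch (σ * z) q r = S at hS ⊢
  field_simp

/-- The condition `hρσ` reads `z = a q / (ρ σ)` without division. -/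
theorem IsBaileyPair.tsum (h : IsBaileyPair a q α β) (hq : ‖q‖ < 1) (hz : ‖z‖ < 1)
    (ha : ∀ n, a * q * q ^ n ≠ 1) (hρσ : a * q = ρ * σ * z) (hρ : ∀ n, ρ * z * q ^ n ≠ 1)
    (hσ : ∀ n, σ * z * q ^ n ≠ 1) (hα : Summable fun r => α r * z ^ r) :
    ∑' n, qPoch ρ q n * qPoch σ q n * z ^ n * β n
      = qPochInf (ρ * z) q * qPochInf (σ * z) q / (qPochInf (a * q) q * qPochInf z q)
        * ∑' r, qPoch ρ q r * qPoch σ q r / (qPoch (ρ * z) q r * qPoch (σ * z) q r)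
          * (α r * z ^ r) := by
  rw [← tsum_mul_left]
  simp only [← tsum_baileySummand hq hz ha hρσ hρ hσ]
  rw [← tsum_sum_antidiagonal (summable_baileySummand ρ σ hq hz ha hα)]
  refine tsum_congr fun n => ?_
  rw [h n, mul_sum]
  refine sum_congr rfl fun r hr => ?_
  rw [baileySummand, Nat.add_sub_cancel' (mem_range_succ_iff.1 hr)]

end BaileyLemma

section TripleProduct

variable {a b : ℂ}

/-- The triangular number `j (j + 1) / 2` of an integer `j`. -/
def triangular (j : ℤ) : ℕ := (j * (j + 1) / 2).toNat

theorem two_mul_triangular (j : ℤ) : 2 * (triangular j : ℤ) = j * (j + 1) := by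
  have nonneg : 0 ≤ j * (j + 1) := by
    rcases lt_or_ge j 0 with hj | hj
    · exact mul_nonneg_of_nonpos_of_nonpos hj.le (by lia)
    · positivity
  rw [triangular, Int.toNat_of_nonneg (Int.ediv_nonneg nonneg two_pos.le),
    Int.mul_ediv_cancel' (Int.even_mul_succ_self j).two_dvd]

/-- The general term of Ramanujan's theta function `f(a, b)`, the bilateral series summed by the
Jacobi triple product identity. -/
noncomputable def thetaTerm (a b : ℂ) (j : ℤ) : ℂ := a ^ triangular j * b ^ triangular (-j)

theorem thetaTerm_neg (a b : ℂ) (j : ℤ) : thetaTerm a b (-j) = thetaTerm b a j := by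
  rw [thetaTerm, neg_neg, mul_comm, thetaTerm]

theorem pow_toNat_mul_thetaTerm (a b : ℂ) {m : ℕ} {j : ℤ} (hj : j ≤ m + 1) :
    (a * b) ^ (m + 1 - j).toNat * thetaTerm a b j = a * (a * b) ^ m * thetaTerm a b (j - 1) := by
  have expA : (m + 1 - j).toNat + triangular j = 1 + m + triangular (j - 1) := by
    zify
    rw [Int.toNat_of_nonneg (by lia)]
    linarith [two_mul_triangular j, two_mul_triangular (j - 1)]
  have expB : (m + 1 - j).toNat + triangular (-j) = m + triangular (-(j - 1)) := by
    zify
    rw [Int.toNat_of_nonneg (by lia)]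
    linarith [two_mul_triangular (-j), two_mul_triangular (-(j - 1))]
  calc _ = a ^ ((m + 1 - j).toNat + triangular j) * b ^ ((m + 1 - j).toNat + triangular (-j)) := by
        rw [thetaTerm]
        ring
    _ = _ := by
        rw [expA, expB, thetaTerm]
        ring

/-- The general term of the finite form of the triple product identity. -/
noncomputable def finiteThetaTerm (a b : ℂ) (m n : ℕ) (j : ℤ) : ℂ :=
  thetaTerm a b j * (invQFactorial (a * b) (m - j) * invQFactorial (a * b) (n + j))

theorem finiteThetaTerm_neg (a b : ℂ) (m n : ℕ) (j : ℤ) :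
    finiteThetaTerm a b m n (-j) = finiteThetaTerm b a n m j := by
  rw [finiteThetaTerm, finiteThetaTerm, thetaTerm_neg, sub_neg_eq_add, ← sub_eq_add_neg,
    mul_comm b a, mul_comm (invQFactorial _ (m + j))]

theorem finiteThetaTerm_succ_left (hp : ∀ n, a * b * (a * b) ^ n ≠ 1) (m n : ℕ) (j : ℤ) :
    (1 - (a * b) ^ (m + n + 1)) * finiteThetaTerm a b (m + 1) n j
      = finiteThetaTerm a b m n j + a * (a * b) ^ m * finiteThetaTerm a b m n (j - 1) := by
  have hm := invQFactorial_sub_one hp (m + 1 - j)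
  have hn := invQFactorial_sub_one hp (n + j)
  rw [show (m + 1 - j) - 1 = m - j by ring] at hm
  simp only [finiteThetaTerm]
  rw [show m - (j - 1) = m + 1 - j by ring, show n + (j - 1) = n + j - 1 by ring, hm, hn,
    Nat.cast_succ]
  rcases lt_or_ge (m + 1 : ℤ) j with hj | hj
  · simp [invQFactorial_of_neg _ (sub_neg.2 hj)]
  rcases lt_or_ge (n + j) 0 with hj' | hj'
  · simp [invQFactorial_of_neg _ hj']
  have shift := pow_toNat_mul_thetaTerm a b hj
  rw [show m + n + 1 = (m + 1 - j).toNat + (n + j).toNat by lia, pow_add]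
  linear_combination (1 - (a * b) ^ (n + j).toNat) * invQFactorial (a * b) (m + 1 - j)
    * invQFactorial (a * b) (n + j) * shift

theorem hasSum_finiteThetaTerm_succ_left (hp : ∀ n, a * b * (a * b) ^ n ≠ 1) {m n : ℕ}
    (h : HasSum (finiteThetaTerm a b m n)
      (qPoch (-a) (a * b) m * qPoch (-b) (a * b) n / qPoch (a * b) (a * b) (m + n))) :
    HasSum (finiteThetaTerm a b (m + 1) n)
      (qPoch (-a) (a * b) (m + 1) * qPoch (-b) (a * b) n / qPoch (a * b) (a * b) (m + 1 + n)) := by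
  have hmn : 1 - (a * b) ^ (m + n + 1) ≠ 0 := by
    rw [pow_succ']
    exact sub_ne_zero.2 (hp (m + n)).symm
  have value : (1 - (a * b) ^ (m + n + 1))
        * (qPoch (-a) (a * b) (m + 1) * qPoch (-b) (a * b) n / qPoch (a * b) (a * b) (m + 1 + n))
      = qPoch (-a) (a * b) m * qPoch (-b) (a * b) n / qPoch (a * b) (a * b) (m + n)
        + a * (a * b) ^ m
          * (qPoch (-a) (a * b) m * qPoch (-b) (a * b) n / qPoch (a * b) (a * b) (m + n)) := by
    rw [add_right_comm m 1 n, qPoch_succ, qPoch_succ (a * b), ← pow_succ']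
    field_simp
    ring
  rw [← hasSum_mul_left_iff hmn, value]
  simp only [finiteThetaTerm_succ_left hp]
  exact h.add (((Equiv.subRight (1 : ℤ)).hasSum_iff.2 h).mul_left (a * (a * b) ^ m))

theorem hasSum_finiteThetaTerm_comm {m n : ℕ}
    (h : HasSum (finiteThetaTerm b a n m)
      (qPoch (-b) (b * a) n * qPoch (-a) (b * a) m / qPoch (b * a) (b * a) (n + m))) :
    HasSum (finiteThetaTerm a b m n)
      (qPoch (-a) (a * b) m * qPoch (-b) (a * b) n / qPoch (a * b) (a * b) (m + n)) := by
  rw [mul_comm a b, add_comm m n, mul_comm (qPoch (-a) _ _)]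
  refine (Equiv.neg ℤ).hasSum_iff.1 (h.congr_fun fun j => ?_)
  exact finiteThetaTerm_neg a b m n j

theorem hasSum_finiteThetaTerm_zero_zero (a b : ℂ) : HasSum (finiteThetaTerm a b 0 0) 1 := by
  have at_zero : finiteThetaTerm a b 0 0 0 = 1 := by
    simp [finiteThetaTerm, thetaTerm, triangular, invQFactorial, qPoch_zero]
  rw [← at_zero]
  refine hasSum_single 0 fun j hj => ?_
  rcases lt_or_gt_of_ne hj with hj | hj
  · simp [finiteThetaTerm, invQFactorial_of_neg _ hj]
  · simp [finiteThetaTerm, invQFactorial_of_neg _ (neg_neg_of_pos hj)]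

theorem hasSum_finiteThetaTerm (hp : ∀ n, a * b * (a * b) ^ n ≠ 1) (m n : ℕ) :
    HasSum (finiteThetaTerm a b m n)
      (qPoch (-a) (a * b) m * qPoch (-b) (a * b) n / qPoch (a * b) (a * b) (m + n)) := by
  induction m with
  | zero =>
    induction n with
    | zero => simpa [qPoch_zero] using hasSum_finiteThetaTerm_zero_zero a b
    | succ n ih =>
      exact hasSum_finiteThetaTerm_comm (hasSum_finiteThetaTerm_succ_left (by rwa [mul_comm b a])
        (hasSum_finiteThetaTerm_comm ih))
  | succ m ih => exact hasSum_finiteThetaTerm_succ_left hp ih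

theorem summable_thetaTerm_natCast (h : ‖a * b‖ < 1) : Summable fun n : ℕ => thetaTerm a b n := by
  have small : Tendsto (fun n => ‖a * (a * b) ^ n‖) atTop (𝓝 0) := by
    simpa using ((tendsto_pow_atTop_nhds_zero_of_norm_lt_one h).const_mul a).norm
  refine summable_of_ratio_norm_eventually_le one_half_lt_one ?_
  filter_upwards [small.eventually_le_const one_half_pos] with n hn
  have ratio := pow_toNat_mul_thetaTerm a b (m := n) (j := n + 1) le_rfl
  rw [sub_self, Int.toNat_zero, pow_zero, one_mul, add_sub_cancel_right] at ratio
  rw [Nat.cast_succ, ratio, norm_mul]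
  gcongr

theorem summable_thetaTerm (h : ‖a * b‖ < 1) : Summable (thetaTerm a b) :=
  .of_nat_of_neg (summable_thetaTerm_natCast h) (by
    rw [mul_comm] at h
    simpa only [thetaTerm_neg] using summable_thetaTerm_natCast h)

theorem tendsto_tsum_finiteThetaTerm (h : ‖a * b‖ < 1) :
    Tendsto (fun n : ℕ => ∑' j, finiteThetaTerm a b n n j) atTop
      (𝓝 ((∑' j, thetaTerm a b j)
        * ((qPochInf (a * b) (a * b))⁻¹ * (qPochInf (a * b) (a * b))⁻¹))) := by
  obtain ⟨M, hM⟩ := exists_norm_invQFactorial_le h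
  rw [← tsum_mul_right]
  refine tendsto_tsum_of_dominated_convergence (bound := fun j => ‖thetaTerm a b j‖ * (M * M))
    ((summable_thetaTerm h).norm.mul_right _) (fun j => ?_) (.of_forall fun n j => ?_)
  · have lim := tendsto_invQFactorial h
    exact ((lim.comp (tendsto_atTop_add_const_right _ (-j) tendsto_natCast_atTop_atTop)).mul
      (lim.comp (tendsto_atTop_add_const_right _ j tendsto_natCast_atTop_atTop))).const_mul _
  · have hM0 := (norm_nonneg _).trans (hM 0)
    rw [finiteThetaTerm, norm_mul, norm_mul]
    gcongr
    exacts [hM _, hM _]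

theorem hasSum_thetaTerm (h : ‖a * b‖ < 1) :
    HasSum (thetaTerm a b)
      (qPochInf (-a) (a * b) * qPochInf (-b) (a * b) * qPochInf (a * b) (a * b)) := by
  have hp := mul_pow_ne_one h h.le
  have hP := qPochInf_ne_zero h hp
  have lim := ((tendsto_qPoch (-a) h).mul (tendsto_qPoch (-b) h)).div
    (tendsto_qPoch_two_mul (a * b) h) hP
  have finite : ∀ n : ℕ, ∑' j, finiteThetaTerm a b n n j
      = qPoch (-a) (a * b) n * qPoch (-b) (a * b) n / qPoch (a * b) (a * b) (2 * n) := fun n => by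
    rw [(hasSum_finiteThetaTerm hp n n).tsum_eq, two_mul]
  have limits_eq := tendsto_nhds_unique ((tendsto_tsum_finiteThetaTerm h).congr finite) lim
  convert (summable_thetaTerm h).hasSum using 1
  field_simp at limits_eq
  rw [limits_eq]
  ring

theorem hasSum_thetaTerm_natCast (h : ‖a * b‖ < 1) :
    HasSum (fun n : ℕ => thetaTerm a b n * (1 + b ^ (2 * n + 1)))
      (qPochInf (-a) (a * b) * qPochInf (-b) (a * b) * qPochInf (a * b) (a * b)) := by
  refine (hasSum_thetaTerm h).nat_add_neg_add_one.congr_fun fun n => ?_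
  have expA : triangular (-(n + 1)) = triangular n := by
    zify
    linarith [two_mul_triangular n, two_mul_triangular (-(n + 1))]
  have expB : triangular (n + 1) = triangular (-n) + (2 * n + 1) := by
    zify
    linarith [two_mul_triangular (n + 1), two_mul_triangular (-n)]
  rw [thetaTerm, thetaTerm, neg_neg, expA, expB]
  ring

end TripleProduct

section Specialization

variable {q : ℂ}

theorem norm_slaterAlpha_le (hq : ‖q‖ ≤ 1) (r : ℕ) : ‖slaterAlpha q r‖ ≤ 2 / ‖1 - q‖ := by
  rw [slaterAlpha, norm_div, norm_mul, norm_mul]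
  gcongr
  calc ‖(-1 : ℂ) ^ r‖ * ‖q ^ r ^ 2‖ * ‖1 - q ^ (2 * r + 1)‖ ≤ 1 * 1 * 2 := by
        gcongr
        · simp
        · simpa using pow_le_one₀ (norm_nonneg q) hq
        · exact norm_one_sub_pow_le_two hq _
    _ = 2 := by norm_num

theorem summable_iterate_slaterAlpha {z : ℂ} (hq : ‖q‖ ≤ 1) (hz : ‖z‖ < 1) (k : ℕ) :
    Summable fun r => (q ^ r * q ^ r ^ 2) ^ k * slaterAlpha q r * z ^ r := by
  refine .of_norm_bounded ((summable_geometric_of_lt_one (norm_nonneg z) hz).mul_left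
    (1 * (2 / ‖1 - q‖))) fun r => ?_
  rw [norm_mul, norm_mul, norm_pow z]
  gcongr
  · rw [← pow_add, ← pow_mul, norm_pow]
    exact pow_le_one₀ (norm_nonneg q) hq
  · exact norm_slaterAlpha_le hq r

theorem thetaTerm_neg_pow_neg (q : ℂ) (k n : ℕ) :
    thetaTerm (-q ^ (4 * k + 3)) (-q) n
      = ((q ^ 2) ^ n * (q ^ 2) ^ n ^ 2) ^ k * ((-1) ^ n * (q ^ 2) ^ n ^ 2) * q ^ n := by
  have hT := two_mul_triangular n
  have hT' := two_mul_triangular (-n)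
  have sum_eq : (triangular n : ℤ) + triangular (-n) = n ^ 2 := by linarith
  have sign : (-1 : ℂ) ^ (triangular n + triangular (-n)) = (-1) ^ n :=
    by
    rw [show triangular n + triangular (-n) = n ^ 2 by exact_mod_cast sum_eq]
    exact neg_one_pow_congr (by simp [Nat.even_pow])
  have expo : (4 * k + 3) * triangular n + triangular (-n)
      = (2 * n + 2 * n ^ 2) * k + 2 * n ^ 2 + n := by
    zify
    linear_combination (2 * (k : ℤ) + 1) * hT + sum_eq
  calc thetaTerm (-q ^ (4 * k + 3)) (-q) n
      = (-1) ^ (triangular n + triangular (-n))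
          * q ^ ((4 * k + 3) * triangular n + triangular (-n)) := by
        rw [thetaTerm, neg_pow, neg_pow q]
        ring
    _ = _ := by
        rw [sign, expo]
        ring

theorem qPochInf_prefactor (hq : ‖q‖ < 1) :
    qPochInf (-q * q) (q ^ 2) * qPochInf (-q * q * q) (q ^ 2)
        / (qPochInf (q ^ 2 * q ^ 2) (q ^ 2) * qPochInf q (q ^ 2))
      = qPochInf (-q) q / qPochInf q q * ((1 - q ^ 2) / (1 + q)) := by
  have hq2 := norm_sq_lt_one hq
  have hQ := mul_pow_ne_one hq2 hq2.le
  have hD : qPochInf q (q ^ 2) ≠ 0 := qPochInf_ne_zero hq2 (mul_pow_ne_one hq hq2.le)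
  have h1 : 1 + q ≠ 0 := by
    simpa using sub_ne_zero.2 (mul_pow_ne_one (x := -q) (by simpa using hq) hq.le 0).symm
  have h2 : 1 - q ^ 2 ≠ 0 := sub_ne_zero.2 (by simpa using (hQ 0).symm)
  have numerator : qPochInf (-q) q
      = (1 + q) * qPochInf (-q * q * q) (q ^ 2) * qPochInf (-q * q) (q ^ 2) := by
    rw [← qPochInf_sq_mul_qPochInf_sq _ hq, ← one_sub_mul_qPochInf (-q) hq2, sub_neg_eq_add,
      mul_assoc (-q), ← sq]
  have denominator : qPochInf q q
      = qPochInf q (q ^ 2) * ((1 - q ^ 2) * qPochInf (q ^ 2 * q ^ 2) (q ^ 2)) := by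
    rw [← qPochInf_sq_mul_qPochInf_sq _ hq, one_sub_mul_qPochInf _ hq2, sq]
  rw [numerator, denominator]
  field_simp

theorem iterate_slaterAlpha_eq_thetaTerm (hq : ‖q‖ < 1) (k r : ℕ) :
    (1 - q ^ 2) / (1 + q) * (qPoch (-q) q (2 * r) / qPoch (-q * q) q (2 * r)
        * (((q ^ 2) ^ r * (q ^ 2) ^ r ^ 2) ^ k * slaterAlpha (q ^ 2) r * q ^ r))
      = thetaTerm (-q ^ (4 * k + 3)) (-q) r * (1 + (-q) ^ (2 * r + 1)) := by
  have hneg : ∀ n, -q * q ^ n ≠ 1 := mul_pow_ne_one (by simpa using hq) hq.le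
  have hr : 1 - -q * q ^ (2 * r) ≠ 0 := sub_ne_zero.2 (hneg _).symm
  have hs : qPoch (-q * q) q (2 * r) ≠ 0 :=
    qPoch_ne_zero (by simpa using mul_pow_mul_pow_ne_one hneg 1) _
  have h1 : 1 - -q ≠ 0 := sub_ne_zero.2 (by simpa using (hneg 0).symm)
  have h2 : 1 - q ^ 2 ≠ 0 :=
    sub_ne_zero.2 (by simpa [sq] using (mul_pow_ne_one hq hq.le 1).symm)
  have ratio : qPoch (-q) q (2 * r) / qPoch (-q * q) q (2 * r)
      = (1 - -q) / (1 - -q * q ^ (2 * r)) := by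
    rw [div_eq_div_iff hs hr, mul_comm, one_sub_mul_pow_mul_qPoch]
  have split : 1 - (q ^ 2) ^ (2 * r + 1)
      = (1 - -q * q ^ (2 * r)) * (1 + (-q) ^ (2 * r + 1)) := by
    rw [Odd.neg_pow ⟨r, rfl⟩]
    ring
  rw [ratio, thetaTerm_neg_pow_neg, slaterAlpha, split, ← sub_neg_eq_add 1 q]
  generalize 1 - -q = C at h1 ⊢
  generalize 1 - -q * q ^ (2 * r) = D at hr ⊢
  field_simp

theorem tsum_iterate_slaterBeta (hq : ‖q‖ < 1) (k : ℕ) :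
    ∑' n, qPoch (-q) q (2 * n) * q ^ n
        * (lowerKernelSum (baileyKernel (q ^ 2) (q ^ 2)))^[k] (slaterBeta (q ^ 2)) n
      = qPochInf (-q) q / qPochInf q q
        * (qPochInf (q ^ (4 * k + 3)) (q ^ (4 * (k + 1))) * qPochInf q (q ^ (4 * (k + 1)))
          * qPochInf (q ^ (4 * (k + 1))) (q ^ (4 * (k + 1)))) := by
  have hq2 := norm_sq_lt_one hq
  have hQ := mul_pow_ne_one hq2 hq2.le
  have hQQ : ∀ n, q ^ 2 * q ^ 2 * (q ^ 2) ^ n ≠ 1 := fun n => by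
    simpa using mul_pow_mul_pow_ne_one hQ 1 n
  have hneg : ∀ n, -q * q ^ n ≠ 1 := mul_pow_ne_one (by simpa using hq) hq.le
  have hnegQ : ∀ m n, -q * q ^ m * (q ^ 2) ^ n ≠ 1 := fun m n => by
    rw [← pow_mul]
    exact mul_pow_mul_pow_ne_one hneg m _
  have bailey := ((isBaileyPair_slater hQ).iterate hQ hQQ k).tsum (ρ := -q) (σ := -q * q) (z := q)
    hq2 hq hQQ (by ring) (by simpa using hnegQ 1) (by simpa [pow_succ, mul_assoc] using hnegQ 2)
    (summable_iterate_slaterAlpha hq2.le hq k)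
  have theta := hasSum_thetaTerm_natCast (a := -q ^ (4 * k + 3)) (b := -q) <| by
    rw [neg_mul_neg, ← pow_succ, norm_pow]
    exact pow_lt_one₀ (norm_nonneg q) hq (by lia)
  rw [neg_mul_neg, neg_neg, neg_neg, ← pow_succ] at theta
  simp only [← qPoch_two_mul] at bailey
  rw [bailey, qPochInf_prefactor hq, mul_assoc, show 4 * (k + 1) = 4 * k + 3 + 1 by ring,
    ← theta.tsum_eq, ← tsum_mul_left]
  congr 1
  exact tsum_congr fun r => by rw [iterate_slaterAlpha_eq_thetaTerm hq]

end Specialization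

namespace PartK

variable {k : ℕ}

theorem eq_zero_of_le (lam : PartK k) {i : ℕ} (hi : k ≤ i) : lam.1 i = 0 := lam.2.2 i hi

theorem ext {lam mu : PartK k} (h : ∀ i, lam.1 i = mu.1 i) : lam = mu := Subtype.ext (funext h)

/-- The partition of at most `k` parts obtained by deleting the part `λ_{k+1}`. -/
def init (lam : PartK (k + 1)) : PartK k where
  val := Function.update lam.1 k 0
  property := by
    refine ⟨antitone_nat_of_succ_le fun i => ?_, fun i hi => ?_⟩
    · have hanti := lam.2.1 (Nat.le_add_right i 1)
      have hzero := lam.2.2 (i + 1)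
      grind
    · have hzero := lam.2.2 i
      grind

theorem init_apply_of_lt (lam : PartK (k + 1)) {i : ℕ} (hi : i < k) : lam.init.1 i = lam.1 i :=
  Function.update_of_ne hi.ne _ _

/-- The partition of at most `k + 2` parts obtained by appending `m` to a partition `λ` of at most
`k + 1` parts. -/
def snoc (lam : PartK (k + 1)) (m : ℕ) (hm : m ≤ lam.1 k) : PartK (k + 2) where
  val := Function.update lam.1 (k + 1) m
  property := by
    refine ⟨antitone_nat_of_succ_le fun i => ?_, fun i hi => ?_⟩
    · have hanti := lam.2.1 (Nat.le_add_right i 1)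
      have hzero := lam.2.2 (i + 1)
      grind
    · have hzero := lam.2.2 i
      grind

theorem snoc_apply_of_le (lam : PartK (k + 1)) {m : ℕ} (hm : m ≤ lam.1 k) {i : ℕ} (hi : i ≤ k) :
    (lam.snoc m hm).1 i = lam.1 i :=
  Function.update_of_ne (by lia) _ _

theorem snoc_apply_last (lam : PartK (k + 1)) {m : ℕ} (hm : m ≤ lam.1 k) :
    (lam.snoc m hm).1 (k + 1) = m :=
  Function.update_self _ _ _

/-- A partition of at most one part is a natural number. -/
def oneEquiv : PartK 1 ≃ ℕ where
  toFun lam := lam.1 0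
  invFun n := ⟨fun i => if i = 0 then n else 0, antitone_nat_of_succ_le fun i => by simp,
    fun i hi => if_neg (by lia)⟩
  left_inv lam := ext fun i => by
    rcases i.eq_zero_or_pos with rfl | hi
    · rfl
    · exact (if_neg hi.ne').trans (lam.eq_zero_of_le hi).symm
  right_inv _ := rfl

/-- A partition of at most `k + 2` parts is one of at most `k + 1` parts followed by a last part
that does not exceed `λ_{k+1}`. -/
def snocEquiv (k : ℕ) : (Σ lam : PartK (k + 1), range (lam.1 k + 1)) ≃ PartK (k + 2) where
  toFun x := x.1.snoc x.2 (mem_range_succ_iff.1 x.2.2)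
  invFun lam := ⟨lam.init, lam.1 (k + 1), by
    rw [init_apply_of_lt _ k.lt_succ_self, mem_range_succ_iff]
    exact lam.2.1 k.le_succ⟩
  left_inv := fun ⟨lam, m, hm⟩ => by
    have hinit : (lam.snoc m (mem_range_succ_iff.1 hm)).init = lam := by
      apply Subtype.ext
      simp [init, snoc, ← lam.eq_zero_of_le le_rfl]
    have hlast := lam.snoc_apply_last (mem_range_succ_iff.1 hm)
    refine Sigma.ext hinit ?_
    rw [Subtype.heq_iff_coe_eq]
    · exact hlast
    · simp [hinit]
  right_inv lam := Subtype.ext <| by simp [init, snoc]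

theorem hasSum_iterate_lowerKernelSum {R : Type*} [CommSemiring R] [TopologicalSpace R]
    [ContinuousAdd R] [RegularSpace R] {K : ℕ → ℕ → R} {f g : ℕ → R} {s : R}
    (h : HasSum (fun lam : PartK (k + 1) =>
      g (lam.1 0) * (∏ i ∈ range k, K (lam.1 i) (lam.1 (i + 1))) * f (lam.1 k)) s) :
    HasSum (fun n => g n * (lowerKernelSum K)^[k] f n) s := by
  induction k generalizing f with
  | zero =>
    simp only [range_zero, prod_empty, mul_one] at h
    exact oneEquiv.hasSum_iff.1 h
  | succ k ih =>
    refine ih (((snocEquiv k).hasSum_iff.2 h).sigma fun lam => ?_)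
    have fiber : ∀ m : range (lam.1 k + 1), g ((snocEquiv k ⟨lam, m⟩).1 0)
          * (∏ i ∈ range (k + 1), K ((snocEquiv k ⟨lam, m⟩).1 i) ((snocEquiv k ⟨lam, m⟩).1 (i + 1)))
          * f ((snocEquiv k ⟨lam, m⟩).1 (k + 1))
        = g (lam.1 0) * (∏ i ∈ range k, K (lam.1 i) (lam.1 (i + 1))) * (K (lam.1 k) m * f m) := by
      intro m
      have hinit : ∀ i ≤ k, (snocEquiv k ⟨lam, m⟩).1 i = lam.1 i :=
        fun _ => lam.snoc_apply_of_le (mem_range_succ_iff.1 m.2)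
      have hlast : (snocEquiv k ⟨lam, m⟩).1 (k + 1) = m :=
        lam.snoc_apply_last (mem_range_succ_iff.1 m.2)
      rw [prod_range_succ, hlast, hinit 0 k.zero_le, hinit k le_rfl, mul_assoc, mul_assoc,
        mul_assoc, prod_congr rfl fun i hi => ?_]
      rw [hinit i (mem_range.1 hi).le, hinit (i + 1) (mem_range.1 hi)]
    simp only [Function.comp_def, fiber]
    rw [lowerKernelSum, mul_sum]
    exact Finset.hasSum _ _

theorem summable_pow_wtK {x : ℝ} (h0 : 0 ≤ x) (h1 : x < 1) (k : ℕ) :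
    Summable fun lam : PartK k => x ^ wtK k lam := by
  induction k with
  | zero =>
    have : Subsingleton (PartK 0) :=
      ⟨fun lam mu => Subtype.ext <| funext fun i => by simp [eq_zero_of_le]⟩
    exact .of_finite
  | succ k ih =>
    have inj : Function.Injective fun lam : PartK (k + 1) => (lam.init, lam.1 k) := by
      intro lam mu h
      obtain ⟨hinit, hlast⟩ := Prod.mk.inj h
      refine ext fun i => ?_
      rcases lt_trichotomy i k with hi | rfl | hi
      · rw [← lam.init_apply_of_lt hi, hinit, mu.init_apply_of_lt hi]
      · exact hlast
      · rw [lam.eq_zero_of_le hi, mu.eq_zero_of_le hi]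
    refine ((ih.mul_of_nonneg (summable_geometric_of_lt_one h0 h1) (fun _ => by positivity)
      (fun _ => by positivity)).comp_injective inj).congr fun lam => ?_
    rw [Function.comp_apply, ← pow_add, wtK, wtK, sum_range_succ, sum_congr rfl fun i hi =>
      lam.init_apply_of_lt (mem_range.1 hi)]

theorem exponent_eq (lam : PartK (k + 1)) :
    2 * wtK (k + 1) lam + 2 * n2K (k + 1) lam - (2 * lam.1 0 ^ 2 + lam.1 0)
      = lam.1 0 + 2 * ∑ i ∈ range k, (lam.1 (i + 1) + lam.1 (i + 1) ^ 2) := by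
  rw [wtK, n2K, sum_range_succ', sum_range_succ', sum_add_distrib]
  lia

/-- The term of the multisum indexed by `λ`, as a function of partitions of at most `k + 1` parts so
that the index of the last part needs no subtraction. -/
noncomputable def multisumTerm (q : ℂ) (lam : PartK (k + 1)) : ℂ :=
  q ^ (2 * wtK (k + 1) lam + 2 * n2K (k + 1) lam - (2 * lam.1 0 ^ 2 + lam.1 0))
    * qPoch (-q) q (2 * lam.1 0)
    / (qPoch (-q ^ 2) (q ^ 2) (lam.1 k) * pochK (q ^ 2) (q ^ 2) (k + 1) lam)

theorem multisumTerm_eq_prod_baileyKernel (q : ℂ) (lam : PartK (k + 1)) :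
    multisumTerm q lam = qPoch (-q) q (2 * lam.1 0) * q ^ lam.1 0
      * (∏ i ∈ range k, baileyKernel (q ^ 2) (q ^ 2) (lam.1 i) (lam.1 (i + 1)))
      * slaterBeta (q ^ 2) (lam.1 k) := by
  have kernel : ∏ i ∈ range k, baileyKernel (q ^ 2) (q ^ 2) (lam.1 i) (lam.1 (i + 1))
      = (q ^ 2) ^ (∑ i ∈ range k, (lam.1 (i + 1) + lam.1 (i + 1) ^ 2))
        / ∏ i ∈ range k, qPoch (q ^ 2) (q ^ 2) (lam.1 i - lam.1 (i + 1)) := by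
    simp only [baileyKernel, prod_div_distrib, ← pow_add, prod_pow_eq_pow_sum]
  rw [multisumTerm, kernel, exponent_eq, pochK, prod_range_succ, lam.eq_zero_of_le le_rfl,
    Nat.sub_zero, slaterBeta, pow_add, pow_mul]
  simp only [div_eq_mul_inv, mul_inv]
  ring

theorem summable_multisumTerm {q : ℂ} (hq : ‖q‖ < 1) (k : ℕ) :
    Summable fun lam : PartK (k + 1) => multisumTerm q lam := by
  have hq2 := norm_sq_lt_one hq
  obtain ⟨A, hA⟩ := exists_norm_qPoch_le (-q) hq
  obtain ⟨B, hB⟩ := exists_norm_inv_qPoch_le (x := -q ^ 2) hq2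
    (mul_pow_ne_one (by simpa using hq2) hq2.le)
  obtain ⟨C, hC⟩ := exists_norm_inv_qPoch_le hq2 (mul_pow_ne_one hq2 hq2.le)
  have hA0 := (norm_nonneg _).trans (hA 0)
  have hB0 := (norm_nonneg _).trans (hB 0)
  have norm_inv_pochK_le : ∀ lam : PartK (k + 1),
      ‖(pochK (q ^ 2) (q ^ 2) (k + 1) lam)⁻¹‖ ≤ C ^ (k + 1) := fun lam => by
    rw [pochK, ← prod_inv_distrib, norm_prod]
    exact (prod_le_prod (fun _ _ => norm_nonneg _) fun _ _ => hC _).trans_eq (by simp)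
  have wtK_le : ∀ lam : PartK (k + 1),
      wtK (k + 1) lam
        ≤ 2 * wtK (k + 1) lam + 2 * n2K (k + 1) lam - (2 * lam.1 0 ^ 2 + lam.1 0) := by
    intro lam
    rw [exponent_eq, wtK, sum_range_succ', sum_add_distrib]
    lia
  refine .of_norm_bounded ((summable_pow_wtK (norm_nonneg q) hq (k + 1)).mul_right
    (A * (B * C ^ (k + 1)))) fun lam => ?_
  rw [multisumTerm, mul_div_assoc, div_eq_mul_inv, mul_inv, norm_mul, norm_mul, norm_mul, norm_pow]
  exact mul_le_mul (pow_le_pow_of_le_one (norm_nonneg q) hq.le (wtK_le lam))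
    (by gcongr; exacts [hA _, hB _, norm_inv_pochK_le lam]) (by positivity) (by positivity)

end PartK

/-- Identity (18): for `k ≥ 1`, `|q| < 1`,
`Σ_{l(λ)≤k} q^{2|λ|+2n_2(λ)-2λ_1^2-λ_1} (-q;q)_{2λ_1} / ((-q^2;q^2)_{λ_k} (q^2;q^2)_λ)
  = ((-q;q)_∞/(q;q)_∞) (q^{4k},q^{4k-1},q;q^{4k})_∞`. -/
theorem rr_type_18 (k : ℕ) (hk : 1 ≤ k) (q : ℂ) (hq : ‖q‖ < 1) :
    ∑' lam : PartK k,
        q ^ (2 * wtK k lam + 2 * n2K k lam - (2 * lam.1 0 ^ 2 + lam.1 0)) *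
          qPoch (-q) q (2 * lam.1 0) /
          (qPoch (-q ^ 2) (q ^ 2) (lam.1 (k - 1)) * pochK (q ^ 2) (q ^ 2) k lam)
      = qPochInf (-q) q / qPochInf q q *
          (qPochInf (q ^ (4 * k)) (q ^ (4 * k)) *
            qPochInf (q ^ (4 * k - 1)) (q ^ (4 * k)) *
            qPochInf q (q ^ (4 * k))) := by
  obtain ⟨j, rfl⟩ := Nat.exists_eq_add_of_le' hk
  have multisum := (PartK.summable_multisumTerm hq j).hasSum
  simp only [PartK.multisumTerm_eq_prod_baileyKernel] at multisum
  have iterated_sum := PartK.hasSum_iterate_lowerKernelSum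
    (g := fun n => qPoch (-q) q (2 * n) * q ^ n) multisum
  change ∑' lam, PartK.multisumTerm q lam = _
  simp only [PartK.multisumTerm_eq_prod_baileyKernel]
  rw [← iterated_sum.tsum_eq, tsum_iterate_slaterBeta hq,
    show 4 * (j + 1) - 1 = 4 * j + 3 by lia]
  ring
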